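/- For every FNM process p and all a, b ∈ L, the following laws of restriction hold up to structure-preserving bisimilarity: (νa)p ~sp p provided a ∉ fn(p) (remove); (νa)(νb)p ~sp (νb)(νa)p provided a ≠ b (reorder); and (νa)p ~sp (νb)(p{b/a}) provided b ∉ fn(p) ∪ bn(p) (alpha-conversion). -/

import Mathlib

/-- Actions of FNM: the invisible action τ, input actions `a ∈ L` and
output actions `ā ∈ L̄` (here `α` plays the role of the finite set `L`). -/
inductive Act (α : Type) where
  | tau : Act α
  | inp : α → Act α
  | out : α → Act α
  deriving DecidableEq

/-- (Open) FNM terms: `0`, the variable `x`, action prefixing `mu.t`, strong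
prefixing `a̲.s`, choice `s+s`, constants `C`, parallel `t|t` and
restriction `(νa)p`.  The syntactic categories are carved out below. -/
inductive FNM (α κ : Type) where
  | nil : FNM α κ
  | var : FNM α κ
  | pref : Act α → FNM α κ → FNM α κ
  | spref : α → FNM α κ → FNM α κ
  | sum : FNM α κ → FNM α κ → FNM α κ
  | const : κ → FNM α κ
  | par : FNM α κ → FNM α κ → FNM α κ
  | res : α → FNM α κ → FNM α κ
  deriving DecidableEq

namespace FNM

variable {α κ : Type}

mutual
  /-- Guarded terms: syntactic category `s ::= 0 | mu.t | a̲.s | s+s`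
  (with `t` restriction-free). -/
  def Grd : FNM α κ → Prop
    | .nil => True
    | .var => False
    | .pref _ t => RF t
    | .spref _ s => Grd s
    | .sum s1 s2 => Grd s1 ∧ Grd s2
    | .const _ => False
    | .par _ _ => False
    | .res _ _ => False
  /-- Restriction-free terms: syntactic category `t ::= q | t|t`, where
  `q ::= s | C | x` is the category of sequential terms. -/
  def RF : FNM α κ → Prop
    | .nil => True
    | .var => True
    | .pref _ t => RF t
    | .spref _ s => Grd s
    | .sum s1 s2 => Grd s1 ∧ Grd s2
    | .const _ => True
    | .par t1 t2 => RF t1 ∧ RF t2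
    | .res _ _ => False
end

/-- Sequential terms: `q ::= s | C | x`. -/
def Seq (t : FNM α κ) : Prop :=
  Grd t ∨ (∃ c, t = FNM.const c) ∨ t = FNM.var

/-- General terms: `p ::= t | (νa)p`. -/
def Gen : FNM α κ → Prop
  | .res _ p => Gen p
  | t => RF t

/-- Closed terms: no occurrence of the variable. -/
def VarFree : FNM α κ → Prop
  | .nil => True
  | .var => False
  | .pref _ t => VarFree t
  | .spref _ s => VarFree s
  | .sum s1 s2 => VarFree s1 ∧ VarFree s2
  | .const _ => True
  | .par t1 t2 => VarFree t1 ∧ VarFree t2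
  | .res _ p => VarFree p

/-- Substitution `p{r/x}` of the term `r` for every occurrence of the
variable `x` in `p` (constants are dealt with via the environment). -/
def subst (r : FNM α κ) : FNM α κ → FNM α κ
  | .nil => .nil
  | .var => r
  | .pref mu t => .pref mu (subst r t)
  | .spref a s => .spref a (subst r s)
  | .sum s1 s2 => .sum (subst r s1) (subst r s2)
  | .const c => .const c
  | .par t1 t2 => .par (subst r t1) (subst r t2)
  | .res a p => .res a (subst r p)

/-- `mu` uses the name `a`. -/
def _root_.Act.uses (a : α) : Act α → Prop
  | .tau => False
  | .inp b => b = a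
  | .out b => b = a

/-- `a` occurs free in a term (through an environment `env` giving the body
of each process constant). -/
inductive FreeIn (env : κ → FNM α κ) (a : α) : FNM α κ → Prop where
  | pref_act {mu : Act α} {t : FNM α κ} : mu.uses a → FreeIn env a (.pref mu t)
  | pref_cont {mu : Act α} {t : FNM α κ} : FreeIn env a t → FreeIn env a (.pref mu t)
  | spref_act {s : FNM α κ} : FreeIn env a (.spref a s)
  | spref_cont {b : α} {s : FNM α κ} : FreeIn env a s → FreeIn env a (.spref b s)
  | sum_l {s1 s2 : FNM α κ} : FreeIn env a s1 → FreeIn env a (.sum s1 s2)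
  | sum_r {s1 s2 : FNM α κ} : FreeIn env a s2 → FreeIn env a (.sum s1 s2)
  | par_l {t1 t2 : FNM α κ} : FreeIn env a t1 → FreeIn env a (.par t1 t2)
  | par_r {t1 t2 : FNM α κ} : FreeIn env a t2 → FreeIn env a (.par t1 t2)
  | res {b : α} {p : FNM α κ} : a ≠ b → FreeIn env a p → FreeIn env a (.res b p)
  | const {c : κ} : FreeIn env a (env c) → FreeIn env a (.const c)

/-- `a` occurs bound (by a restriction) in a term. -/
inductive BoundIn (env : κ → FNM α κ) (a : α) : FNM α κ → Prop where
  | res_here {p : FNM α κ} : BoundIn env a (.res a p)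
  | res_in {b : α} {p : FNM α κ} : BoundIn env a p → BoundIn env a (.res b p)
  | pref {mu : Act α} {t : FNM α κ} : BoundIn env a t → BoundIn env a (.pref mu t)
  | spref {b : α} {s : FNM α κ} : BoundIn env a s → BoundIn env a (.spref b s)
  | sum_l {s1 s2 : FNM α κ} : BoundIn env a s1 → BoundIn env a (.sum s1 s2)
  | sum_r {s1 s2 : FNM α κ} : BoundIn env a s2 → BoundIn env a (.sum s1 s2)
  | par_l {t1 t2 : FNM α κ} : BoundIn env a t1 → BoundIn env a (.par t1 t2)
  | par_r {t1 t2 : FNM α κ} : BoundIn env a t2 → BoundIn env a (.par t1 t2)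
  | const {c : κ} : BoundIn env a (env c) → BoundIn env a (.const c)

end FNM

/-- A place of the net `N_FNM`: a sequential (extended) term, rendered as a
pure sequential term together with the record `ρ : α → Bool` of which names
have been replaced by their restricted counterparts (`ρ a = true` represents
the substitution `{a'/a}`). -/
abbrev Place (α κ : Type) := FNM α κ × (α → Bool)

namespace FNM

variable {α κ : Type} [DecidableEq α] [DecidableEq κ] [Fintype α]

/-- The decomposition function `dec`, mapping (extended) terms to markings:
`dec(0) = θ`, `dec(p|q) = dec(p) ⊕ dec(q)`, `dec((νa)p) = dec(p){a'/a}`, and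
a sequential term other than `0` is mapped to a single place. -/
def dec (ρ : α → Bool) : FNM α κ → Multiset (Place α κ)
  | .nil => 0
  | .par t1 t2 => dec ρ t1 + dec ρ t2
  | .res a p => dec (Function.update ρ a true) p
  | t => {(t, ρ)}

end FNM

/-- Extended visible actions: inputs and outputs, possibly restricted
(`inp a true` represents `a'`, `out a false` represents `ā`, etc.). -/
inductive XAct (α : Type) where
  | inp : α → Bool → XAct α
  | out : α → Bool → XAct α

/-- Labels of net transitions: `τ` is the empty sequence, and otherwise a
sequence of extended actions. -/
abbrev Lbl (α : Type) := List (XAct α)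

/-- An extended action carries no restricted name. -/
def XAct.unres {α : Type} : XAct α → Prop
  | .inp _ r => r = false
  | .out _ r => r = false

/-- The label contributed by prefix `mu` under the restriction record `ρ`. -/
def actL {α : Type} (ρ : α → Bool) : Act α → Lbl α
  | .tau => []
  | .inp a => [XAct.inp a (ρ a)]
  | .out a => [XAct.out a (ρ a)]

/-- The synchronization relation `Sync(σ1, σ2, σ)`: `Sync(α, ᾱ, τ)`,
`Sync(aσ, ā, σ)` and `Sync(ā, aσ, σ)` for `σ ≠ ε` (also on restricted
actions). -/
inductive Sync {α : Type} : Lbl α → Lbl α → Lbl α → Prop where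
  | inout (a : α) (r : Bool) : Sync [XAct.inp a r] [XAct.out a r] []
  | outin (a : α) (r : Bool) : Sync [XAct.out a r] [XAct.inp a r] []
  | seqL (a : α) (r : Bool) (σ : Lbl α) :
      σ ≠ [] → Sync (XAct.inp a r :: σ) [XAct.out a r] σ
  | seqR (a : α) (r : Bool) (σ : Lbl α) :
      σ ≠ [] → Sync [XAct.out a r] (XAct.inp a r :: σ) σ

namespace FNM

variable {α κ : Type} [DecidableEq α] [DecidableEq κ] [Fintype α]

/-- A marking is admissible if for no name `a` both `a` and its restricted
counterpart `a'` occur free in it. -/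
def Adm (env : κ → FNM α κ) (m : Multiset (Place α κ)) : Prop :=
  ∀ a : α, ¬ ((∃ p ∈ m, FreeIn env a p.1 ∧ p.2 a = false) ∧
              (∃ p ∈ m, FreeIn env a p.1 ∧ p.2 a = true))

/-- The net transitions of `N_FNM`, generated by the rules (pref), (sum₁),
(sum₂), (cons), (s-pref) and (s-com). -/
inductive Tr (env : κ → FNM α κ) :
    Multiset (Place α κ) → Lbl α → Multiset (Place α κ) → Prop where
  | pref (ρ : α → Bool) (mu : Act α) (t : FNM α κ) :
      Tr env {(FNM.pref mu t, ρ)} (actL ρ mu) (dec ρ t)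
  | sum1 (ρ : α → Bool) (s1 s2 : FNM α κ) (σ : Lbl α) (m : Multiset (Place α κ)) :
      Tr env (dec ρ s1) σ m → Tr env {(FNM.sum s1 s2, ρ)} σ m
  | sum2 (ρ : α → Bool) (s1 s2 : FNM α κ) (σ : Lbl α) (m : Multiset (Place α κ)) :
      Tr env (dec ρ s2) σ m → Tr env {(FNM.sum s1 s2, ρ)} σ m
  | cons (ρ : α → Bool) (c : κ) (σ : Lbl α) (m : Multiset (Place α κ)) :
      Tr env (dec ρ (env c)) σ m → Tr env {(FNM.const c, ρ)} σ m
  | spref (ρ : α → Bool) (a : α) (s : FNM α κ) (σ : Lbl α) (m : Multiset (Place α κ)) :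
      Tr env (dec ρ s) σ m →
      Tr env {(FNM.spref a s, ρ)} (XAct.inp a (ρ a) :: σ) m
  | scom (m1 m2 m1' m2' : Multiset (Place α κ)) (σ1 σ2 σ : Lbl α) :
      Tr env m1 σ1 m1' → Tr env m2 σ2 m2' →
      Adm env (m1 + m2) → Sync σ1 σ2 σ →
      Tr env (m1 + m2) σ (m1' + m2')

/-- Tritions of the net `N_FNM`: only those whose label contains no
restricted action are kept. -/
def NetTr (env : κ → FNM α κ) (m : Multiset (Place α κ)) (σ : Lbl α)
    (m' : Multiset (Place α κ)) : Prop :=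
  Tr env m σ m' ∧ ∀ x ∈ σ, x.unres

/-- First projection of a linking. -/
def pi1 (l : Multiset (Place α κ × Place α κ)) : Multiset (Place α κ) :=
  l.map Prod.fst

/-- Second projection of a linking. -/
def pi2 (l : Multiset (Place α κ × Place α κ)) : Multiset (Place α κ) :=
  l.map Prod.snd

/-- Structure-preserving bisimulation on the net `N_FNM`. -/
def IsSPB (env : κ → FNM α κ) (R : Set (Multiset (Place α κ × Place α κ))) : Prop :=
  ∀ l ∈ R, ∀ c ≤ l,
    (∀ σ m1, NetTr env (pi1 c) σ m1 →
      ∃ m2 cb, NetTr env (pi2 c) σ m2 ∧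
        pi1 cb = m1 ∧ pi2 cb = m2 ∧ l - c + cb ∈ R) ∧
    (∀ σ m2, NetTr env (pi2 c) σ m2 →
      ∃ m1 cb, NetTr env (pi1 c) σ m1 ∧
        pi1 cb = m1 ∧ pi2 cb = m2 ∧ l - c + cb ∈ R)

/-- `p ~sp q`: some structure-preserving bisimulation contains a linking
projecting on `dec(p)` and `dec(q)`. -/
def SPEq (env : κ → FNM α κ) (p q : FNM α κ) : Prop :=
  ∃ R, IsSPB env R ∧ ∃ l ∈ R,
    pi1 l = dec (fun _ => false) p ∧ pi2 l = dec (fun _ => false) q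

end FNM

namespace FNM

variable {α κ : Type} [DecidableEq α]

/-- Renaming of name `a` to `b` in an action. -/
def _root_.Act.ren (a b : α) : Act α → Act α
  | .tau => .tau
  | .inp c => .inp (if c = a then b else c)
  | .out c => .out (if c = a then b else c)

/-- The syntactic substitution `p{b/a}` of action `b` for action `a`: free
occurrences of `a` are renamed to `b` (renaming stops under a binder `(νa)`);
each constant `C` occurring in the term is replaced by its renamed
counterpart `f C` (whose defining body must be the renamed body of `C`, as
required in the hypotheses of the alpha-conversion law below). -/
def renName (f : κ → κ) (a b : α) : FNM α κ → FNM α κ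
  | .nil => .nil
  | .var => .var
  | .pref mu t => .pref (mu.ren a b) (renName f a b t)
  | .spref c s => .spref (if c = a then b else c) (renName f a b s)
  | .sum s1 s2 => .sum (renName f a b s1) (renName f a b s2)
  | .const c => .const (f c)
  | .par t1 t2 => .par (renName f a b t1) (renName f a b t2)
  | .res c p => if c = a then .res c p else .res c (renName f a b p)

end FNM

namespace FNM

variable {α κ : Type}

inductive ARel (G : α → α → Prop) : Act α → Act α → Prop where
  | tau : ARel G .tau .tau
  | inp {x y} : G x y → ARel G (.inp x) (.inp y)
  | out {x y} : G x y → ARel G (.out x) (.out y)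

inductive TRel (G : α → α → Prop) (K : κ → κ → Prop) : FNM α κ → FNM α κ → Prop where
  | nil : TRel G K .nil .nil
  | var : TRel G K .var .var
  | pref {mu nu t t'} : ARel G mu nu → TRel G K t t' → TRel G K (.pref mu t) (.pref nu t')
  | spref {x y t t'} : G x y → TRel G K t t' → TRel G K (.spref x t) (.spref y t')
  | sum {s1 s2 t1 t2} : TRel G K s1 t1 → TRel G K s2 t2 → TRel G K (.sum s1 s2) (.sum t1 t2)
  | const {c d} : K c d → TRel G K (.const c) (.const d)
  | par {s1 s2 t1 t2} : TRel G K s1 t1 → TRel G K s2 t2 → TRel G K (.par s1 s2) (.par t1 t2)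

theorem ARel.flip {G : α → α → Prop} {m n : Act α} (h : ARel G m n) :
    ARel (fun x y => G y x) n m := by
  cases h with
  | tau => exact .tau
  | inp h => exact .inp h
  | out h => exact .out h

theorem TRel.flip {G : α → α → Prop} {K : κ → κ → Prop} {t t' : FNM α κ} (h : TRel G K t t') :
    TRel (fun x y => G y x) (fun x y => K y x) t' t := by
  induction h with
  | nil => exact .nil
  | var => exact .var
  | pref h _ ih => exact .pref h.flip ih
  | spref h _ ih => exact .spref h ih
  | sum _ _ i1 i2 => exact .sum i1 i2
  | const h => exact .const h
  | par _ _ i1 i2 => exact .par i1 i2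

structure Good (env : κ → FNM α κ) (G : α → α → Prop) (K : κ → κ → Prop) : Prop where
  fn : ∀ x y y', G x y → G x y' → y = y'
  inj : ∀ x x' y, G x y → G x' y → x = x'
  body : ∀ c d, K c d → TRel G K (env c) (env d)

theorem Good.flip {env : κ → FNM α κ} {G : α → α → Prop} {K : κ → κ → Prop}
    (h : Good env G K) : Good env (fun x y => G y x) (fun x y => K y x) :=
  ⟨fun _ _ _ h1 h2 => h.inj _ _ _ h1 h2, fun _ _ _ h1 h2 => h.fn _ _ _ h1 h2,
    fun _ _ hk => (h.body _ _ hk).flip⟩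

theorem TRel.free {env : κ → FNM α κ} {G : α → α → Prop} {K : κ → κ → Prop}
    (hg : Good env G K) {x : α} {t : FNM α κ} (hf : FreeIn env x t) :
    ∀ t', TRel G K t t' → ∃ y, G x y ∧ FreeIn env y t' := by
  induction hf with
  | pref_act hu =>
    intro t' h
    cases h with
    | pref ha _ =>
      cases ha with
      | tau => exact absurd hu (by simp [Act.uses])
      | inp h => simp only [Act.uses] at hu; subst hu; exact ⟨_, h, .pref_act rfl⟩
      | out h => simp only [Act.uses] at hu; subst hu; exact ⟨_, h, .pref_act rfl⟩
  | pref_cont _ ih =>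
    intro t' h
    cases h with
    | pref _ h => obtain ⟨y, hy, hf⟩ := ih _ h; exact ⟨y, hy, .pref_cont hf⟩
  | spref_act =>
    intro t' h
    cases h with
    | spref hx h => exact ⟨_, hx, .spref_act⟩
  | spref_cont _ ih =>
    intro t' h
    cases h with
    | spref _ h => obtain ⟨y, hy, hf⟩ := ih _ h; exact ⟨y, hy, .spref_cont hf⟩
  | sum_l _ ih =>
    intro t' h
    cases h with
    | sum h _ => obtain ⟨y, hy, hf⟩ := ih _ h; exact ⟨y, hy, .sum_l hf⟩
  | sum_r _ ih =>
    intro t' h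
    cases h with
    | sum _ h => obtain ⟨y, hy, hf⟩ := ih _ h; exact ⟨y, hy, .sum_r hf⟩
  | par_l _ ih =>
    intro t' h
    cases h with
    | par h _ => obtain ⟨y, hy, hf⟩ := ih _ h; exact ⟨y, hy, .par_l hf⟩
  | par_r _ ih =>
    intro t' h
    cases h with
    | par _ h => obtain ⟨y, hy, hf⟩ := ih _ h; exact ⟨y, hy, .par_r hf⟩
  | res _ _ _ => intro t' h; cases h
  | const _ ih =>
    intro t' h
    cases h with
    | const h => obtain ⟨y, hy, hf⟩ := ih _ (hg.body _ _ h); exact ⟨y, hy, .const hf⟩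

def Compat (G : α → α → Prop) (ρ ρ' : α → Bool) : Prop :=
  ∀ x y, G x y → ρ x = ρ' y ∧ (ρ x = false → x = y)

theorem Compat.flip {G : α → α → Prop} {ρ ρ' : α → Bool} (h : Compat G ρ ρ') :
    Compat (fun x y => G y x) ρ' ρ := by
  intro x y hxy
  obtain ⟨h1, h2⟩ := h _ _ hxy
  exact ⟨h1.symm, fun h' => (h2 (h1.trans h')).symm⟩

def PRel (G : α → α → Prop) (K : κ → κ → Prop) (p q : Place α κ) : Prop :=
  TRel G K p.1 q.1 ∧ Compat G p.2 q.2

theorem PRel.flip {G : α → α → Prop} {K : κ → κ → Prop} {p q : Place α κ} (h : PRel G K p q) :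
    PRel (fun x y => G y x) (fun x y => K y x) q p := ⟨h.1.flip, h.2.flip⟩

inductive XRel (G : α → α → Prop) : XAct α → XAct α → Prop where
  | inp {x y r} : G x y → (r = false → x = y) → XRel G (.inp x r) (.inp y r)
  | out {x y r} : G x y → (r = false → x = y) → XRel G (.out x r) (.out y r)

abbrev LRel (G : α → α → Prop) : Lbl α → Lbl α → Prop := List.Forall₂ (XRel G)

theorem LRel.eq {G : α → α → Prop} {σ σ' : Lbl α} (h : LRel G σ σ')
    (hu : ∀ x ∈ σ, x.unres) : σ = σ' := by
  induction h with
  | nil => rfl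
  | cons h _ ih =>
    have h0 := hu _ List.mem_cons_self
    rw [ih (fun x hx => hu x (List.mem_cons_of_mem _ hx))]
    cases h with
    | inp _ h => rw [h h0]
    | out _ h => rw [h h0]

theorem actL_rel {G : α → α → Prop} {ρ ρ' : α → Bool} (h : Compat G ρ ρ') {m n : Act α}
    (ha : ARel G m n) : LRel G (actL ρ m) (actL ρ' n) := by
  cases ha with
  | tau => exact .nil
  | inp hx =>
    obtain ⟨h1, h2⟩ := h _ _ hx
    simp only [actL, ← h1]
    exact .cons (.inp hx h2) .nil
  | out hx =>
    obtain ⟨h1, h2⟩ := h _ _ hx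
    simp only [actL, ← h1]
    exact .cons (.out hx h2) .nil

theorem sync_rel {env : κ → FNM α κ} {G : α → α → Prop} {K : κ → κ → Prop}
    (hg : Good env G K) {σ1 σ2 σ σ1' σ2' : Lbl α} (hs : Sync σ1 σ2 σ)
    (h1 : LRel G σ1 σ1') (h2 : LRel G σ2 σ2') : ∃ σ', Sync σ1' σ2' σ' ∧ LRel G σ σ' := by
  cases hs with
  | inout a r =>
    rcases h1 with _ | ⟨(⟨h1, -⟩ | ⟨h1, -⟩), ⟨⟩⟩
    rcases h2 with _ | ⟨(⟨h2, -⟩ | ⟨h2, -⟩), ⟨⟩⟩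
    obtain rfl := hg.fn _ _ _ h1 h2
    exact ⟨_, .inout _ _, .nil⟩
  | outin a r =>
    rcases h1 with _ | ⟨(⟨h1, -⟩ | ⟨h1, -⟩), ⟨⟩⟩
    rcases h2 with _ | ⟨(⟨h2, -⟩ | ⟨h2, -⟩), ⟨⟩⟩
    obtain rfl := hg.fn _ _ _ h1 h2
    exact ⟨_, .outin _ _, .nil⟩
  | seqL a r _ hn =>
    rcases h1 with _ | ⟨(⟨h1, -⟩ | ⟨h1, -⟩), h⟩
    rcases h2 with _ | ⟨(⟨h2, -⟩ | ⟨h2, -⟩), ⟨⟩⟩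
    obtain rfl := hg.fn _ _ _ h1 h2
    refine ⟨_, .seqL _ _ _ ?_, h⟩
    rintro rfl; cases h; exact hn rfl
  | seqR a r _ hn =>
    rcases h1 with _ | ⟨(⟨h1, -⟩ | ⟨h1, -⟩), ⟨⟩⟩
    rcases h2 with _ | ⟨(⟨h2, -⟩ | ⟨h2, -⟩), h⟩
    obtain rfl := hg.fn _ _ _ h1 h2
    refine ⟨_, .seqR _ _ _ ?_, h⟩
    rintro rfl; cases h; exact hn rfl

section
variable [DecidableEq α] [DecidableEq κ] [Fintype α]

theorem dec_link {G : α → α → Prop} {K : κ → κ → Prop} {ρ ρ' : α → Bool} (hc : Compat G ρ ρ')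
    {t t' : FNM α κ} (h : TRel G K t t') :
    ∃ l : Multiset (Place α κ × Place α κ), pi1 l = dec ρ t ∧ pi2 l = dec ρ' t' ∧
      ∀ q ∈ l, PRel G K q.1 q.2 := by
  have single : ∀ t t' : FNM α κ, TRel G K t t' → dec ρ t = {(t, ρ)} → dec ρ' t' = {(t', ρ')} →
      ∃ l : Multiset (Place α κ × Place α κ), pi1 l = dec ρ t ∧ pi2 l = dec ρ' t' ∧
      ∀ q ∈ l, PRel G K q.1 q.2 := by
    intro t t' h e e'
    refine ⟨{((t, ρ), (t', ρ'))}, by simp [pi1, e], by simp [pi2, e'], ?_⟩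
    intro q hq
    obtain rfl := Multiset.mem_singleton.1 hq
    exact ⟨h, hc⟩
  induction h with
  | nil => exact ⟨0, rfl, rfl, by simp⟩
  | par _ _ i1 i2 =>
    obtain ⟨l1, a1, b1, c1⟩ := i1
    obtain ⟨l2, a2, b2, c2⟩ := i2
    refine ⟨l1 + l2, ?_, ?_, ?_⟩
    · simp only [pi1, dec, Multiset.map_add] at *; rw [a1, a2]
    · simp only [pi2, dec, Multiset.map_add] at *; rw [b1, b2]
    · intro q hq
      rcases Multiset.mem_add.1 hq with h | h
      · exact c1 q h
      · exact c2 q h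
  | var => exact single _ _ .var rfl rfl
  | pref h1 h2 => exact single _ _ (.pref h1 h2) rfl rfl
  | spref h1 h2 => exact single _ _ (.spref h1 h2) rfl rfl
  | sum h1 h2 => exact single _ _ (.sum h1 h2) rfl rfl
  | const h1 => exact single _ _ (.const h1) rfl rfl

theorem adm_rel {env : κ → FNM α κ} {G : α → α → Prop} {K : κ → κ → Prop}
    (hg : Good env G K) (c : Multiset (Place α κ × Place α κ))
    (hc : ∀ q ∈ c, PRel G K q.1 q.2) (h : Adm env (pi1 c)) : Adm env (pi2 c) := by
  have key : ∀ y r, (∃ p ∈ pi2 c, FreeIn env y p.1 ∧ p.2 y = r) →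
      ∃ x, G x y ∧ ∃ p ∈ pi1 c, FreeIn env x p.1 ∧ p.2 x = r := by
    rintro y r ⟨p, hp, hf, hr⟩
    obtain ⟨q, hq, rfl⟩ := Multiset.mem_map.1 hp
    obtain ⟨h1, h2⟩ := hc q hq
    obtain ⟨x, hx, hx'⟩ := TRel.free hg.flip hf _ h1.flip
    exact ⟨x, hx, q.1, Multiset.mem_map.2 ⟨q, hq, rfl⟩, hx', (h2 _ _ hx).1.trans hr⟩
  rintro y ⟨h1, h2⟩
  obtain ⟨x, hx, h1⟩ := key _ _ h1
  obtain ⟨x', hx', h2⟩ := key _ _ h2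
  obtain rfl := hg.inj _ _ _ hx hx'
  exact h x ⟨h1, h2⟩

theorem pi1_single {c : Multiset (Place α κ × Place α κ)} {p : Place α κ} (h : {p} = pi1 c) :
    ∃ q, c = {(p, q)} := by
  obtain ⟨⟨x, y⟩, rfl, h2⟩ := Multiset.map_eq_singleton.1 h.symm
  obtain rfl : x = p := h2
  exact ⟨y, rfl⟩

theorem map_split {β γ : Type} [DecidableEq β] (g : β → γ) (m1 : Multiset γ) :
    ∀ (m2 : Multiset γ) (c : Multiset β), c.map g = m1 + m2 →
      ∃ c1 c2, c = c1 + c2 ∧ c1.map g = m1 ∧ c2.map g = m2 := by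
  induction m1 using Multiset.induction with
  | empty => intro m2 c h; exact ⟨0, c, by simp, by simp, by simpa using h⟩
  | cons x m ih =>
    intro m2 c h
    rw [Multiset.cons_add] at h
    obtain ⟨y, hy, e, h'⟩ := (Multiset.map_eq_cons g c (m + m2) x).2 h
    obtain ⟨c1, c2, e1, e2, e3⟩ := ih m2 _ h'
    refine ⟨y ::ₘ c1, c2, ?_, by simp [e, e2], e3⟩
    rw [Multiset.cons_add, ← e1, Multiset.cons_erase hy]

theorem sim {env : κ → FNM α κ} {G : α → α → Prop} {K : κ → κ → Prop}
    (hg : Good env G K) {m : Multiset (Place α κ)} {σ : Lbl α} {m' : Multiset (Place α κ)}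
    (ht : Tr env m σ m') :
    ∀ c : Multiset (Place α κ × Place α κ), m = pi1 c → (∀ q ∈ c, PRel G K q.1 q.2) →
    ∃ cb σ', Tr env (pi2 c) σ' (pi2 cb) ∧ pi1 cb = m' ∧ LRel G σ σ' ∧
      ∀ q ∈ cb, PRel G K q.1 q.2 := by
  induction ht with
  | pref ρ mu t =>
    intro c hm hc
    obtain ⟨⟨t', ρ'⟩, rfl⟩ := pi1_single hm
    obtain ⟨h1, h2⟩ := hc _ (Multiset.mem_singleton_self _)
    dsimp only at h1 h2
    cases h1 with
    | pref ha h1 =>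
      obtain ⟨l, e1, e2, hl⟩ := dec_link h2 h1
      refine ⟨l, _, ?_, e1, actL_rel h2 ha, hl⟩
      rw [e2]
      exact Tr.pref _ _ _
  | sum1 ρ s1 s2 σ m _ ih =>
    intro c hm hc
    obtain ⟨⟨t', ρ'⟩, rfl⟩ := pi1_single hm
    obtain ⟨h1, h2⟩ := hc _ (Multiset.mem_singleton_self _)
    dsimp only at h1 h2
    cases h1 with
    | sum ha hb =>
      obtain ⟨l, e1, e2, hl⟩ := dec_link h2 ha
      obtain ⟨cb, σ', k1, k2⟩ := ih l e1.symm hl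
      rw [e2] at k1
      exact ⟨cb, σ', Tr.sum1 _ _ _ _ _ k1, k2⟩
  | sum2 ρ s1 s2 σ m _ ih =>
    intro c hm hc
    obtain ⟨⟨t', ρ'⟩, rfl⟩ := pi1_single hm
    obtain ⟨h1, h2⟩ := hc _ (Multiset.mem_singleton_self _)
    dsimp only at h1 h2
    cases h1 with
    | sum ha hb =>
      obtain ⟨l, e1, e2, hl⟩ := dec_link h2 hb
      obtain ⟨cb, σ', k1, k2⟩ := ih l e1.symm hl
      rw [e2] at k1
      exact ⟨cb, σ', Tr.sum2 _ _ _ _ _ k1, k2⟩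
  | cons ρ d σ m _ ih =>
    intro c hm hc
    obtain ⟨⟨t', ρ'⟩, rfl⟩ := pi1_single hm
    obtain ⟨h1, h2⟩ := hc _ (Multiset.mem_singleton_self _)
    dsimp only at h1 h2
    cases h1 with
    | const hk =>
      obtain ⟨l, e1, e2, hl⟩ := dec_link h2 (hg.body _ _ hk)
      obtain ⟨cb, σ', k1, k2⟩ := ih l e1.symm hl
      rw [e2] at k1
      exact ⟨cb, σ', Tr.cons _ _ _ _ k1, k2⟩
  | spref ρ a s σ m _ ih =>
    intro c hm hc
    obtain ⟨⟨t', ρ'⟩, rfl⟩ := pi1_single hm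
    obtain ⟨h1, h2⟩ := hc _ (Multiset.mem_singleton_self _)
    dsimp only at h1 h2
    cases h1 with
    | spref ha h1 =>
      obtain ⟨l, e1, e2, hl⟩ := dec_link h2 h1
      obtain ⟨cb, σ', k1, k2, k3, k4⟩ := ih l e1.symm hl
      rw [e2] at k1
      obtain ⟨g1, g2⟩ := h2 _ _ ha
      refine ⟨cb, _, Tr.spref _ _ _ _ _ k1, k2, ?_, k4⟩
      rw [← g1]
      exact .cons (.inp ha g2) k3
  | scom m1 m2 m1' m2' σ1 σ2 σ _ _ hadm hs i1 i2 =>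
    intro c hm hc
    obtain ⟨c1, c2, rfl, h1, h2⟩ := map_split _ _ _ _ hm.symm
    obtain ⟨b1, τ1, k1, e1, l1, r1⟩ := i1 c1 h1.symm
      (fun q hq => hc q (Multiset.mem_add.2 (.inl hq)))
    obtain ⟨b2, τ2, k2, e2, l2, r2⟩ := i2 c2 h2.symm
      (fun q hq => hc q (Multiset.mem_add.2 (.inr hq)))
    obtain ⟨τ, s, l⟩ := sync_rel hg hs l1 l2
    rw [hm] at hadm
    have hadm' := adm_rel hg _ hc hadm
    refine ⟨b1 + b2, τ, ?_, ?_, l, ?_⟩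
    · simp only [pi2, Multiset.map_add] at *
      exact Tr.scom _ _ _ _ _ _ _ k1 k2 hadm' s
    · simp only [pi1, Multiset.map_add] at *
      rw [e1, e2]
    · intro q hq
      rcases Multiset.mem_add.1 hq with h | h
      · exact r1 q h
      · exact r2 q h

theorem spb {env : κ → FNM α κ} {G : α → α → Prop} {K : κ → κ → Prop}
    (hg : Good env G K) :
    IsSPB env {l : Multiset (Place α κ × Place α κ) | ∀ q ∈ l, PRel G K q.1 q.2} := by
  intro l hl c hcl
  have hc : ∀ q ∈ c, PRel G K q.1 q.2 := fun q hq => hl q (Multiset.mem_of_le hcl hq)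
  have fin : ∀ cb : Multiset (Place α κ × Place α κ), (∀ q ∈ cb, PRel G K q.1 q.2) →
      l - c + cb ∈ {l : Multiset (Place α κ × Place α κ) | ∀ q ∈ l, PRel G K q.1 q.2} := by
    intro cb hcb q hq
    rcases Multiset.mem_add.1 hq with h | h
    · exact hl q (Multiset.mem_of_le (Multiset.sub_le_self _ _) h)
    · exact hcb q h
  constructor
  · rintro σ m1 ⟨ht, hu⟩
    obtain ⟨cb, σ', k1, k2, k3, k4⟩ := sim hg ht c rfl hc
    obtain rfl := k3.eq hu
    exact ⟨_, cb, ⟨k1, hu⟩, k2, rfl, fin cb k4⟩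
  · rintro σ m2 ⟨ht, hu⟩
    have e1 : ∀ d : Multiset (Place α κ × Place α κ), pi1 (d.map Prod.swap) = pi2 d := by
      intro d; simp [pi1, pi2, Multiset.map_map]
    have e2 : ∀ d : Multiset (Place α κ × Place α κ), pi2 (d.map Prod.swap) = pi1 d := by
      intro d; simp [pi1, pi2, Multiset.map_map]
    obtain ⟨cb, σ', k1, k2, k3, k4⟩ := sim hg.flip ht (c.map Prod.swap) (e1 c).symm (by
      intro q hq
      obtain ⟨q', hq', rfl⟩ := Multiset.mem_map.1 hq
      exact (hc q' hq').flip)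
    obtain rfl := LRel.eq k3 hu
    rw [e2] at k1
    refine ⟨_, cb.map Prod.swap, ⟨k1, hu⟩, e1 cb, (e2 cb).trans k2, fin _ ?_⟩
    intro q hq
    obtain ⟨q', hq', rfl⟩ := Multiset.mem_map.1 hq
    exact (k4 q' hq').flip

theorem Grd.rf {t : FNM α κ} (h : Grd t) : RF t := by
  cases t <;> simp_all [Grd, RF]

theorem renName_rel {env : κ → FNM α κ} (f : κ → κ) (a b : α) (P : α → Prop) :
    ∀ t : FNM α κ, RF t → (∀ x, FreeIn env x t → P x) →
    TRel (fun x y => y = (if x = a then b else x) ∧ P x)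
      (fun c d => d = f c ∧ ∀ x, FreeIn env x (.const c) → P x) t (renName f a b t) := by
  intro t
  induction t with
  | nil => intro _ _; exact .nil
  | var => intro _ _; exact .var
  | pref mu t ih =>
    intro hr hp
    refine .pref ?_ (ih (by simpa [RF] using hr) fun x hx => hp x (.pref_cont hx))
    cases mu with
    | tau => exact .tau
    | inp x => exact .inp ⟨rfl, hp _ (.pref_act rfl)⟩
    | out x => exact .out ⟨rfl, hp _ (.pref_act rfl)⟩
  | spref c t ih =>
    intro hr hp
    simp only [RF] at hr
    exact .spref ⟨rfl, hp _ .spref_act⟩ (ih hr.rf fun x hx => hp x (.spref_cont hx))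
  | sum s t i1 i2 =>
    intro hr hp
    simp only [RF] at hr
    exact .sum (i1 hr.1.rf fun x hx => hp x (.sum_l hx)) (i2 hr.2.rf fun x hx => hp x (.sum_r hx))
  | const c => intro _ hp; exact .const ⟨rfl, hp⟩
  | par s t i1 i2 =>
    intro hr hp
    simp only [RF] at hr
    exact .par (i1 hr.1 fun x hx => hp x (.par_l hx)) (i2 hr.2 fun x hx => hp x (.par_r hx))
  | res c t _ => intro hr; simp [RF] at hr

theorem renName_id (a : α) : ∀ t : FNM α κ, RF t → renName id a a t = t := by
  have hi : ∀ x : α, (if x = a then a else x) = x := by intro x; split <;> simp_all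
  intro t
  induction t with
  | nil => intro _; rfl
  | var => intro _; rfl
  | pref mu t ih =>
    intro hr
    have := ih (by simpa [RF] using hr)
    cases mu <;> simp [renName, this, Act.ren, hi]
  | spref c t ih =>
    intro hr
    simp only [RF] at hr
    simp [renName, ih hr.rf, hi]
  | sum s t i1 i2 =>
    intro hr
    simp only [RF] at hr
    simp [renName, i1 hr.1.rf, i2 hr.2.rf]
  | const c => intro _; rfl
  | par s t i1 i2 =>
    intro hr
    simp only [RF] at hr
    simp [renName, i1 hr.1, i2 hr.2]
  | res c t _ => intro hr; simp [RF] at hr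

theorem speq_core {env : κ → FNM α κ} (henv : ∀ c, Grd (env c) ∧ VarFree (env c))
    (f : κ → κ) (a b : α) (hf : ∀ c, env (f c) = renName f a b (env c))
    (t : FNM α κ) (ht : RF t) (hb : a = b ∨ ¬ FreeIn env b t) (ρ ρ' : α → Bool)
    (hρ : ∀ x, FreeIn env x t → ρ x = ρ' (if x = a then b else x) ∧
      (ρ x = false → x = if x = a then b else x)) (p q : FNM α κ)
    (hp : dec (fun _ => false) p = dec ρ t)
    (hq : dec (fun _ => false) q = dec ρ' (renName f a b t)) : SPEq env p q := by
  have hg : Good env (fun x y => y = (if x = a then b else x) ∧ FreeIn env x t)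
      (fun c d => d = f c ∧ ∀ x, FreeIn env x (.const c) → FreeIn env x t) := by
    refine ⟨?_, ?_, ?_⟩
    · rintro x y y' ⟨rfl, _⟩ ⟨rfl, _⟩; rfl
    · rintro x x' y ⟨rfl, h1⟩ ⟨h, h2⟩
      rcases hb with rfl | hb
      · split_ifs at h <;> simp_all
      · have : x ≠ b := by rintro rfl; exact hb h1
        have : x' ≠ b := by rintro rfl; exact hb h2
        split_ifs at h <;> simp_all
    · rintro c d ⟨rfl, h⟩
      rw [hf]
      exact renName_rel f a b _ _ (henv c).1.rf fun x hx => h x (.const hx)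
  obtain ⟨l, e1, e2, hl⟩ := dec_link (ρ := ρ) (ρ' := ρ') (by
    rintro x y ⟨rfl, hx⟩
    exact hρ x hx) (renName_rel (env := env) f a b (fun x => FreeIn env x t) t ht fun x hx => hx)
  exact ⟨_, spb hg, l, hl, e1.trans hp.symm, e2.trans hq.symm⟩

theorem speq_same {env : κ → FNM α κ} (henv : ∀ c, Grd (env c) ∧ VarFree (env c))
    (t : FNM α κ) (ht : RF t) (ρ ρ' : α → Bool)
    (hρ : ∀ x, FreeIn env x t → ρ x = ρ' x) (p q : FNM α κ) (a : α)
    (hp : dec (fun _ => false) p = dec ρ t)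
    (hq : dec (fun _ => false) q = dec ρ' t) : SPEq env p q := by
  have hi : ∀ x : α, (if x = a then a else x) = x := by intro x; split <;> simp_all
  refine speq_core henv id a a (fun c => (renName_id a _ (henv c).1.rf).symm) t ht (.inl rfl)
    ρ ρ' ?_ p q hp ?_
  · intro x hx; rw [hi]; exact ⟨hρ x hx, fun _ => rfl⟩
  · rw [renName_id a t ht]; exact hq

theorem gen_core (env : κ → FNM α κ) (p : FNM α κ) (hp : Gen p) :
    ∃ (t : FNM α κ) (u : α → Bool), RF t ∧ (∀ ρ, dec ρ p = dec (fun x => ρ x || u x) t) ∧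
      (∀ x, FreeIn env x t → u x = false → FreeIn env x p) ∧
      (∀ x, u x = true → BoundIn env x p) ∧
      (∀ f a b ρ, dec ρ (renName f a b p) =
        dec (fun x => ρ x || u x) (if u a then t else renName f a b t)) := by
  have base : RF p → ∃ (t : FNM α κ) (u : α → Bool), RF t ∧
      (∀ ρ, dec ρ p = dec (fun x => ρ x || u x) t) ∧
      (∀ x, FreeIn env x t → u x = false → FreeIn env x p) ∧
      (∀ x, u x = true → BoundIn env x p) ∧
      (∀ f a b ρ, dec ρ (renName f a b p) =
        dec (fun x => ρ x || u x) (if u a then t else renName f a b t)) := by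
    intro h
    exact ⟨p, fun _ => false, h, by simp, by simp, by simp, by simp⟩
  induction p with
  | res c p ih =>
    have hp' : Gen p := by simpa [Gen] using hp
    obtain ⟨t, u, h1, h2, h3, h4, h5⟩ := ih hp' (by
      intro h
      exact ⟨p, fun _ => false, h, by simp, by simp, by simp, by simp⟩)
    have hu : ∀ ρ : α → Bool, (fun x => Function.update ρ c true x || u x) =
        fun x => ρ x || Function.update u c true x := by
      intro ρ; funext x
      by_cases hx : x = c
      · subst hx; simp
      · simp [Function.update_of_ne hx]
    refine ⟨t, Function.update u c true, h1, ?_, ?_, ?_, ?_⟩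
    · intro ρ; rw [dec, h2, hu]
    · intro x hx hux
      by_cases hxc : x = c
      · subst hxc; simp at hux
      · rw [Function.update_of_ne hxc] at hux
        exact .res hxc (h3 x hx hux)
    · intro x hux
      by_cases hxc : x = c
      · subst hxc; exact .res_here
      · rw [Function.update_of_ne hxc] at hux
        exact .res_in (h4 x hux)
    · intro f a b ρ
      by_cases hca : c = a
      · subst hca
        simp only [renName, if_true, dec, h2, hu, Function.update_self]
      · rw [renName, if_neg hca, dec, h5, hu, Function.update_of_ne (Ne.symm hca)]
  | _ => exact base (by simpa [Gen] using hp)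

end

end FNM

open FNM in
/-- laws of the restriction operator, up to
structure-preserving bisimilarity: (remove) `(νa)p ~sp p` if `a ∉ fn(p)`;
(reorder) `(νa)(νb)p ~sp (νb)(νa)p` if `a ≠ b`; (alpha-conversion)
`(νa)p ~sp (νb)(p{b/a})` if `b ∉ fn(p) ∪ bn(p)`. -/
theorem speq_restriction_laws {α κ : Type} [DecidableEq α] [DecidableEq κ]
    [Fintype α] [Finite κ]
    (env : κ → FNM α κ) (henv : ∀ c, Grd (env c) ∧ VarFree (env c))
    (p : FNM α κ) (hp : Gen p) (hpv : VarFree p) (a b : α) :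
    (¬ FreeIn env a p → SPEq env (FNM.res a p) p) ∧
    (a ≠ b → SPEq env (FNM.res a (FNM.res b p)) (FNM.res b (FNM.res a p))) ∧
    (∀ f : κ → κ, (∀ c, env (f c) = renName f a b (env c)) →
      ¬ FreeIn env b p → ¬ BoundIn env b p →
      SPEq env (FNM.res a p) (FNM.res b (renName f a b p))) := by
  obtain ⟨t, u, h1, h2, h3, h4, h5⟩ := gen_core env p hp
  refine ⟨?_, ?_, ?_⟩
  · intro ha
    refine speq_same henv t h1 _ _ ?_ _ _ a (by rw [dec, h2]) (h2 _)
    intro x hx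
    by_cases hxa : x = a
    · subst hxa
      cases hu : u x with
      | false => exact absurd (h3 x hx hu) ha
      | true => simp
    · simp [Function.update_of_ne hxa]
  · intro hab
    refine speq_same henv t h1 _ _ (fun x _ => rfl) _ _ a
      (by rw [dec, dec, h2]) (by rw [dec, dec, Function.update_comm hab, h2])
  · intro f hf hfb hbb
    have hub : u b = false := by
      cases hu : u b with
      | false => rfl
      | true => exact absurd (h4 b hu) hbb
    have hbt : ¬ FreeIn env b t := fun h => hfb (h3 b h hub)
    cases hua : u a with
    | true =>
      refine speq_same henv t h1 _ _ ?_ _ _ a (by rw [dec, h2])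
        (by rw [dec, h5, hua, if_pos rfl])
      intro x hx
      have hxb : x ≠ b := by rintro rfl; exact hbt hx
      by_cases hxa : x = a
      · subst hxa; simp [hua]
      · simp [Function.update_of_ne hxa, Function.update_of_ne hxb]
    | false =>
      refine speq_core henv f a b hf t h1 (.inr hbt) _ _ ?_ _ _ (by rw [dec, h2])
        (by rw [dec, h5, hua, if_neg (by simp)])
      intro x hx
      have hxb : x ≠ b := by rintro rfl; exact hbt hx
      by_cases hxa : x = a
      · subst hxa; simp
      · simp [hxa, Function.update_of_ne hxa, Function.update_of_ne hxb]
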